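/- Let M_{a,b} : U → Mat_{m×m}(ℂ), a, b ≥ 0, be continuously differentiable functions on an open subset U ⊆ ℝ^N. For a finitely supported sequence q = (q_0, q_1, q_2, …) of vectors in ℂ^m, set Q(q) := q_0 + Σ_{i≥0} M_{0,i}·q_{i+1}. Then the following are equivalent: (a) the family (M_{a,b}) satisfies the three master equations; (b) for every a ≥ 0, every k ∈ {1,…,N}, and every finitely supported sequence q: M_{a,0}·q_0 + Σ_{i≥0} (M_{a+1,i} + M_{a,i+1})·q_{i+1} = M_{a,0}·Q(q), and Σ_{i≥0} (∂_k M_{a,i})·q_i = (∂_k M_{a,0})·Q(q). -/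

import Mathlib

/-!
Both conditions in (b) are linear in `q`, so they may be compared coefficient by coefficient.
The coefficient of `q₀` is a tautology; the coefficient of `q_{b+1}` in the first identity is
(ME3) for `(a, b)`, and in the second identity it is (ME2) for `(a, b)`. Hence (b) is equivalent
to (ME2) and (ME3) together (`first_iff`, `second_iff`). Finally (ME1) is a consequence of these
two: differentiating (ME3) by the Leibniz rule (`pderM_mul`) and subtracting (ME2) leaves (ME1).
-/

/-- The `k`-th partial derivative of a matrix-valued function on `ℝ^N`, entrywise. -/
noncomputable def pderM {N m : ℕ} (k : Fin N)
    (M : (Fin N → ℝ) → Matrix (Fin m) (Fin m) ℂ) (x : Fin N → ℝ) :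
    Matrix (Fin m) (Fin m) ℂ :=
  Matrix.of fun i j => fderiv ℝ (fun y => M y i j) x (Pi.single k 1)

/-- `Q(q) = q₀ + Σ_{i≥0} M_{0,i}·q_{i+1}` for a finitely supported sequence `q`. -/
noncomputable def Qmap {N m : ℕ}
    (M : ℕ → ℕ → (Fin N → ℝ) → Matrix (Fin m) (Fin m) ℂ)
    (x : Fin N → ℝ) (q : ℕ →₀ (Fin m → ℂ)) : Fin m → ℂ :=
  q 0 + ∑ᶠ i : ℕ, Matrix.mulVec (M 0 i x) (q (i + 1))

open Matrix

lemma finite_support_mulVec {m : ℕ} (A : ℕ → Matrix (Fin m) (Fin m) ℂ) (q : ℕ →₀ (Fin m → ℂ)) :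
    (Function.support fun i => A i *ᵥ q i).Finite := by
  refine q.hasFiniteSupport.subset fun i hi hq => hi ?_
  simp [hq]

lemma finite_support_mulVec_succ {m : ℕ} (A : ℕ → Matrix (Fin m) (Fin m) ℂ) (q : ℕ →₀ (Fin m → ℂ)) :
    (Function.support fun i => A i *ᵥ q (i + 1)).Finite := by
  refine (q.hasFiniteSupport.preimage (f := fun i => i + 1)
    (add_left_injective 1).injOn).subset fun i hi hq => hi ?_
  simp [show q (i + 1) = 0 from hq]

lemma finsum_mulVec_eq_zero_add {m : ℕ} (A : ℕ → Matrix (Fin m) (Fin m) ℂ) (q : ℕ →₀ (Fin m → ℂ)) :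
    ∑ᶠ i, A i *ᵥ q i = A 0 *ᵥ q 0 + ∑ᶠ i, A (i + 1) *ᵥ q (i + 1) := by
  have h1 := finite_support_mulVec A q
  have h2 := finite_support_mulVec_succ (fun i => A (i + 1)) q
  rw [← tsum_eq_finsum (L := .unconditional ℕ) h1, ← tsum_eq_finsum (L := .unconditional ℕ) h2]
  exact (summable_of_hasFiniteSupport h1).tsum_eq_zero_add

lemma mulVec_Qmap {m N : ℕ} (M : ℕ → ℕ → (Fin N → ℝ) → Matrix (Fin m) (Fin m) ℂ) (x : Fin N → ℝ)
    (q : ℕ →₀ (Fin m → ℂ)) (B : Matrix (Fin m) (Fin m) ℂ) :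
    B *ᵥ Qmap M x q = B *ᵥ q 0 + ∑ᶠ i, (B * M 0 i x) *ᵥ q (i + 1) := by
  have h := B.mulVecLin.toAddMonoidHom.map_finsum
    (finite_support_mulVec_succ (fun i => M 0 i x) q)
  simp only [LinearMap.toAddMonoidHom_coe, mulVecLin_apply, mulVec_mulVec] at h
  rw [Qmap, mulVec_add, h]

/-- A linear map in the tail `(q₁, q₂, …)` determines its matrix coefficients. -/
lemma finsum_mulVec_succ_ext_iff {m : ℕ} (A B : ℕ → Matrix (Fin m) (Fin m) ℂ) :
    (∀ q : ℕ →₀ (Fin m → ℂ), ∑ᶠ i, A i *ᵥ q (i + 1) = ∑ᶠ i, B i *ᵥ q (i + 1)) ↔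
      ∀ i, A i = B i := by
  refine ⟨fun h b => ext_of_mulVec_single fun j => ?_, fun h q => by simp only [h]⟩
  have key (C : ℕ → Matrix (Fin m) (Fin m) ℂ) (v : Fin m → ℂ) :
      ∑ᶠ i, C i *ᵥ (Finsupp.single (b + 1) v) (i + 1) = C b *ᵥ v := by
    rw [finsum_eq_single _ b]
    · simp
    · intro i hi
      simp [Ne.symm hi]
  simpa only [key] using h (Finsupp.single (b + 1) (Pi.single j 1))

lemma first_iff {m N : ℕ} (M : ℕ → ℕ → (Fin N → ℝ) → Matrix (Fin m) (Fin m) ℂ) (x : Fin N → ℝ) (a : ℕ) :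
    (∀ q : ℕ →₀ (Fin m → ℂ),
      M a 0 x *ᵥ q 0 + ∑ᶠ i : ℕ, (M (a + 1) i x + M a (i + 1) x) *ᵥ q (i + 1)
        = M a 0 x *ᵥ Qmap M x q) ↔
      ∀ b, M (a + 1) b x + M a (b + 1) x = M a 0 x * M 0 b x := by
  simp only [mulVec_Qmap, add_right_inj]
  exact finsum_mulVec_succ_ext_iff _ _

lemma second_iff {m N : ℕ} (M : ℕ → ℕ → (Fin N → ℝ) → Matrix (Fin m) (Fin m) ℂ) (x : Fin N → ℝ) (a : ℕ)
    (k : Fin N) :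
    (∀ q : ℕ →₀ (Fin m → ℂ),
      ∑ᶠ i : ℕ, pderM k (M a i) x *ᵥ q i = pderM k (M a 0) x *ᵥ Qmap M x q) ↔
      ∀ b, pderM k (M a (b + 1)) x = pderM k (M a 0) x * M 0 b x := by
  simp only [mulVec_Qmap, finsum_mulVec_eq_zero_add (fun i => pderM k (M a i) x), add_right_inj]
  exact finsum_mulVec_succ_ext_iff _ _

lemma pderM_add {m N : ℕ} {k : Fin N} {A B : (Fin N → ℝ) → Matrix (Fin m) (Fin m) ℂ} {x : Fin N → ℝ}
    (hA : ∀ i j, DifferentiableAt ℝ (fun y => A y i j) x)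
    (hB : ∀ i j, DifferentiableAt ℝ (fun y => B y i j) x) :
    pderM k (fun y => A y + B y) x = pderM k A x + pderM k B x := by
  ext i j
  simp only [pderM, of_apply, Matrix.add_apply]
  rw [fderiv_fun_add (hA i j) (hB i j)]
  rfl

lemma pderM_mul {m N : ℕ} {k : Fin N} {A B : (Fin N → ℝ) → Matrix (Fin m) (Fin m) ℂ} {x : Fin N → ℝ}
    (hA : ∀ i j, DifferentiableAt ℝ (fun y => A y i j) x)
    (hB : ∀ i j, DifferentiableAt ℝ (fun y => B y i j) x) :
    pderM k (fun y => A y * B y) x = pderM k A x * B x + A x * pderM k B x := by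
  ext i j
  simp only [pderM, of_apply, Matrix.add_apply, mul_apply]
  rw [fderiv_fun_sum fun l _ => (hA i l).fun_mul (hB l j), ← Finset.sum_add_distrib,
    _root_.sum_apply]
  refine Finset.sum_congr rfl fun l _ => ?_
  rw [fderiv_fun_mul (hA i l) (hB l j)]
  simp only [_root_.add_apply, _root_.smul_apply, smul_eq_mul]
  ring

lemma pderM_congr {m N : ℕ} {k : Fin N} {A B : (Fin N → ℝ) → Matrix (Fin m) (Fin m) ℂ}
    {U : Set (Fin N → ℝ)} (hU : IsOpen U) (h : ∀ y ∈ U, A y = B y) {x : Fin N → ℝ}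
    (hx : x ∈ U) : pderM k A x = pderM k B x := by
  ext i j
  simp only [pderM, of_apply]
  rw [Filter.EventuallyEq.fderiv_eq]
  filter_upwards [hU.mem_nhds hx] with y hy
  rw [h y hy]

/-- Linear-algebraic characterization of the master equations: for a continuously
differentiable family `(M_{a,b})` on an open `U ⊆ ℝ^N`, the three master equations
hold iff for every `a`, `k`, and every finitely supported sequence `q`,
`M_{a,0}·q₀ + Σ_i (M_{a+1,i} + M_{a,i+1})·q_{i+1} = M_{a,0}·Q(q)` and
`Σ_i (∂ₖM_{a,i})·q_i = (∂ₖM_{a,0})·Q(q)`. -/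
theorem master_equations_iff_loop_space_condition
    {m N : ℕ} (hm : 1 ≤ m) (hN : 1 ≤ N)
    (U : Set (Fin N → ℝ)) (hU : IsOpen U)
    (M : ℕ → ℕ → (Fin N → ℝ) → Matrix (Fin m) (Fin m) ℂ)
    (hsmooth : ∀ a b : ℕ, ∀ i j : Fin m, ContDiffOn ℝ 1 (fun x => M a b x i j) U) :
    ((∀ a b : ℕ, ∀ k : Fin N, ∀ x ∈ U,
        pderM k (M (a + 1) b) x = M a 0 x * pderM k (M 0 b) x) ∧
     (∀ a b : ℕ, ∀ k : Fin N, ∀ x ∈ U,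
        pderM k (M a (b + 1)) x = pderM k (M a 0) x * M 0 b x) ∧
     (∀ a b : ℕ, ∀ x ∈ U,
        M (a + 1) b x + M a (b + 1) x = M a 0 x * M 0 b x))
    ↔
    (∀ a : ℕ, ∀ k : Fin N, ∀ x ∈ U, ∀ q : ℕ →₀ (Fin m → ℂ),
      (Matrix.mulVec (M a 0 x) (q 0)
          + ∑ᶠ i : ℕ, Matrix.mulVec (M (a + 1) i x + M a (i + 1) x) (q (i + 1))
        = Matrix.mulVec (M a 0 x) (Qmap M x q)) ∧
      (∑ᶠ i : ℕ, Matrix.mulVec (pderM k (M a i) x) (q i)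
        = Matrix.mulVec (pderM k (M a 0) x) (Qmap M x q))) := by
  have hd (a b : ℕ) (x) (hx : x ∈ U) (i j : Fin m) :
      DifferentiableAt ℝ (fun y => M a b y i j) x :=
    ((hsmooth a b i j).differentiableOn one_ne_zero).differentiableAt (hU.mem_nhds hx)
  constructor
  · rintro ⟨-, h2, h3⟩ a k x hx q
    exact ⟨(first_iff M x a).2 (fun b => h3 a b x hx) q,
      (second_iff M x a k).2 (fun b => h2 a b k x hx) q⟩
  · intro h
    have h2 (a b : ℕ) (k : Fin N) (x) (hx : x ∈ U) :
        pderM k (M a (b + 1)) x = pderM k (M a 0) x * M 0 b x :=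
      (second_iff M x a k).1 (fun q => (h a k x hx q).2) b
    -- The first identity does not involve `k`, but an index is needed to extract it: `N ≥ 1`.
    have h3 (a b : ℕ) (x) (hx : x ∈ U) :
        M (a + 1) b x + M a (b + 1) x = M a 0 x * M 0 b x :=
      (first_iff M x a).1 (fun q => (h a ⟨0, hN⟩ x hx q).1) b
    refine ⟨fun a b k x hx => ?_, h2, h3⟩
    have h4 := pderM_congr (k := k) hU (h3 a b) hx
    rw [pderM_add (hd _ _ x hx) (hd _ _ x hx), pderM_mul (hd _ _ x hx) (hd _ _ x hx),
      h2 a b k x hx, add_comm] at h4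
    exact add_left_cancel h4
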